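/- Let P be an N-point set in [0,1)², and let j ∈ ℕ₀² and m ∈ 𝔻_j be such that the dyadic interval I_{j,m} contains exactly one point z of P. Then the Haar coefficient of the discrepancy function satisfies μ_{j,m} = ∫_{[0,1)²} D_P(x)·h_{j,m}(x) dx = μ_{j,m}^z − N·2^{-2|j|-4}, where μ_{j,m}^z = ∫_{[0,1)²} χ_{C_z}(x)·h_{j,m}(x) dx and C_z = [z₁,1) × [z₂,1). -/

import Mathlib

open MeasureTheory

noncomputable section

/-- The half-open unit square `[0,1) × [0,1)` in `ℝ × ℝ`. -/
def unitSq : Set (ℝ × ℝ) := Set.Ico (0:ℝ) 1 ×ˢ Set.Ico (0:ℝ) 1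

/-- The discrepancy function of the point configuration `p`. -/
def disc (N : ℕ) (p : Fin N → ℝ × ℝ) (x : ℝ × ℝ) : ℝ :=
  (∑ i : Fin N, if 0 ≤ (p i).1 ∧ (p i).1 < x.1 ∧ 0 ≤ (p i).2 ∧ (p i).2 < x.2
    then (1:ℝ) else 0) - N * x.1 * x.2

/-- The dyadic interval `I_{j,m}`. -/
def dyadic (j m : ℕ × ℕ) : Set (ℝ × ℝ) :=
  Set.Ico ((m.1:ℝ)/2^j.1) (((m.1:ℝ)+1)/2^j.1) ×ˢ
    Set.Ico ((m.2:ℝ)/2^j.2) (((m.2:ℝ)+1)/2^j.2)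

/-- The one-dimensional Haar function adapted to `[m/2^j, (m+1)/2^j)`. -/
def haar1 (j m : ℕ) (t : ℝ) : ℝ :=
  if (m:ℝ)/2^j ≤ t ∧ t < (2*(m:ℝ)+1)/2^(j+1) then 1
  else if (2*(m:ℝ)+1)/2^(j+1) ≤ t ∧ t < ((m:ℝ)+1)/2^j then -1
  else 0

/-- The two-dimensional Haar function `h_{j,m}`. -/
def haar (j m : ℕ × ℕ) (x : ℝ × ℝ) : ℝ := haar1 j.1 m.1 x.1 * haar1 j.2 m.2 x.2

/-- The characteristic function of `C_z = [z₁,1) × [z₂,1)`. -/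
def chiC (z x : ℝ × ℝ) : ℝ :=
  if z.1 ≤ x.1 ∧ x.1 < 1 ∧ z.2 ≤ x.2 ∧ x.2 < 1 then 1 else 0

lemma haar1_measurable (j m : ℕ) : Measurable (haar1 j m) := by
  unfold haar1
  refine Measurable.ite ?_ measurable_const (Measurable.ite ?_ measurable_const measurable_const)
  · exact measurableSet_Ico
  · exact measurableSet_Ico

lemma haar1_abs_le (j m : ℕ) (t : ℝ) : |haar1 j m t| ≤ 1 := by
  unfold haar1
  split_ifs <;> simp

lemma haar1_integral (j m : ℕ) (hm : m < 2 ^ j) (f : ℝ → ℝ) (hf : Continuous f) :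
    ∫ t in Set.Ico (0:ℝ) 1, f t * haar1 j m t
      = (∫ t in ((m:ℝ)/2^j)..((2*(m:ℝ)+1)/2^(j+1)), f t)
        - ∫ t in ((2*(m:ℝ)+1)/2^(j+1))..(((m:ℝ)+1)/2^j), f t := by
  have hac : (m:ℝ)/2^j ≤ (2*(m:ℝ)+1)/2^(j+1) := by
    rw [div_le_div_iff₀ (by positivity) (by positivity), pow_succ]
    nlinarith [pow_pos (two_pos : (0:ℝ) < 2) j]
  have hcb : (2*(m:ℝ)+1)/2^(j+1) ≤ ((m:ℝ)+1)/2^j := by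
    rw [div_le_div_iff₀ (by positivity) (by positivity), pow_succ]
    nlinarith [pow_pos (two_pos : (0:ℝ) < 2) j]
  have ha : 0 ≤ (m:ℝ)/2^j := by positivity
  have hb : ((m:ℝ)+1)/2^j ≤ 1 := by
    rw [div_le_one (by positivity)]
    exact_mod_cast hm
  unfold haar1
  generalize (m:ℝ)/2^j = a at *
  generalize (2*(m:ℝ)+1)/2^(j+1) = c at *
  generalize ((m:ℝ)+1)/2^j = b at *
  have key : ∀ t, f t * (if a ≤ t ∧ t < c then (1:ℝ) else if c ≤ t ∧ t < b then -1 else 0)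
      = (Set.Ico a c).indicator f t - (Set.Ico c b).indicator f t := by
    intro t
    simp only [Set.indicator, Set.mem_Ico]
    split_ifs with h1 h2 h2
    · linarith [h1.2, h2.1]
    · ring
    · ring
    · ring
  have hi : ∀ u v : ℝ, IntegrableOn f (Set.Ico u v) := fun u v =>
    (hf.integrableOn_Icc (a := u) (b := v)).mono_set Set.Ico_subset_Icc_self
  simp_rw [key]
  rw [integral_sub]
  · rw [setIntegral_indicator measurableSet_Ico, setIntegral_indicator measurableSet_Ico,
      Set.inter_eq_right.mpr (Set.Ico_subset_Ico ha (hcb.trans hb)),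
      Set.inter_eq_right.mpr (Set.Ico_subset_Ico (ha.trans hac) hb),
      intervalIntegral.integral_of_le hac, intervalIntegral.integral_of_le hcb,
      integral_Ico_eq_integral_Ioc, integral_Ico_eq_integral_Ioc]
  · exact (hi 0 1).indicator measurableSet_Ico
  · exact (hi 0 1).indicator measurableSet_Ico

lemma haar1_integral_one (j m : ℕ) (hm : m < 2 ^ j) :
    ∫ t in Set.Ico (0:ℝ) 1, haar1 j m t = 0 := by
  have h := haar1_integral j m hm (fun _ => 1) continuous_const
  simp only [one_mul, intervalIntegral.integral_const, smul_eq_mul, mul_one] at h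
  rw [h, pow_succ]
  field_simp
  ring

lemma haar1_integral_id (j m : ℕ) (hm : m < 2 ^ j) :
    ∫ t in Set.Ico (0:ℝ) 1, t * haar1 j m t = - (1 / 2 ^ (2 * j + 2)) := by
  have h := haar1_integral j m hm (fun t => t) continuous_id
  simp only [integral_id] at h
  rw [h, show (2:ℝ) ^ (j+1) = 2^j * 2 from pow_succ _ _,
    show (2:ℝ) ^ (2*j+2) = (2^j)^2 * 4 by rw [pow_add, pow_mul']; norm_num]
  field_simp
  ring

lemma haar1_integral_step (j m : ℕ) (hm : m < 2 ^ j) (z : ℝ)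
    (hz : ¬ (z ∈ Set.Ico ((m:ℝ)/2^j) (((m:ℝ)+1)/2^j))) :
    ∫ t in Set.Ico (0:ℝ) 1, (if z < t then (1:ℝ) else 0) * haar1 j m t = 0 := by
  have hac : (m:ℝ)/2^j ≤ (2*(m:ℝ)+1)/2^(j+1) := by
    rw [div_le_div_iff₀ (by positivity) (by positivity), pow_succ]
    nlinarith [pow_pos (two_pos : (0:ℝ) < 2) j]
  have hcb : (2*(m:ℝ)+1)/2^(j+1) ≤ ((m:ℝ)+1)/2^j := by
    rw [div_le_div_iff₀ (by positivity) (by positivity), pow_succ]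
    nlinarith [pow_pos (two_pos : (0:ℝ) < 2) j]
  by_cases h : z < (m:ℝ)/2^j
  · refine Eq.trans (integral_congr_ae (Filter.Eventually.of_forall fun t => ?_))
      (haar1_integral_one j m hm)
    beta_reduce
    split_ifs with h1
    · ring
    · unfold haar1
      rw [if_neg (by intro h2; linarith [h2.1]), if_neg (by intro h2; linarith [h2.1])]
      ring
  · have h' : ((m:ℝ)+1)/2^j ≤ z := by
      by_contra h2
      exact hz ⟨not_lt.mp h, not_le.mp h2⟩
    refine integral_eq_zero_of_ae (Filter.Eventually.of_forall fun t => ?_)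
    rw [Pi.zero_apply]
    beta_reduce
    split_ifs with h1
    · unfold haar1
      rw [if_neg (by intro h2; linarith [h2.2]), if_neg (by intro h2; linarith [h2.2])]
      ring
    · ring

lemma step_le_eq_lt (g : ℝ → ℝ) (z : ℝ) :
    ∫ t in Set.Ico (0:ℝ) 1, (if z ≤ t then (1:ℝ) else 0) * g t
      = ∫ t in Set.Ico (0:ℝ) 1, (if z < t then (1:ℝ) else 0) * g t := by
  apply integral_congr_ae
  apply ae_restrict_of_ae
  filter_upwards [Measure.ae_ne volume z] with t ht
  have : z ≤ t ↔ z < t := ⟨fun h => lt_of_le_of_ne h (Ne.symm ht), le_of_lt⟩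
  simp only [this]

lemma unitSq_integral_mul (f g : ℝ → ℝ) :
    ∫ x in unitSq, f x.1 * g x.2
      = (∫ t in Set.Ico (0:ℝ) 1, f t) * ∫ t in Set.Ico (0:ℝ) 1, g t := by
  unfold unitSq
  rw [Measure.volume_eq_prod]
  exact setIntegral_prod_mul f g _ _

lemma unitSq_integrable (f : ℝ × ℝ → ℝ) (hf : Measurable f) (hb : ∀ x ∈ unitSq, |f x| ≤ 1) :
    IntegrableOn f unitSq := by
  have hms : MeasurableSet unitSq := measurableSet_Ico.prod measurableSet_Ico
  refine Measure.integrableOn_of_bounded (M := 1) ?_ hf.aestronglyMeasurable ?_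
  · unfold unitSq
    rw [Measure.volume_eq_prod, Measure.prod_prod]
    simp
  · exact (ae_restrict_iff' hms).mpr (Filter.Eventually.of_forall hb)

lemma haar_measurable (j m : ℕ × ℕ) : Measurable (haar j m) :=
  ((haar1_measurable j.1 m.1).comp measurable_fst).mul
    ((haar1_measurable j.2 m.2).comp measurable_snd)

lemma haar_abs_le (j m : ℕ × ℕ) (x : ℝ × ℝ) : |haar j m x| ≤ 1 := by
  unfold haar
  rw [abs_mul]
  exact mul_le_one₀ (haar1_abs_le _ _ _) (abs_nonneg _) (haar1_abs_le _ _ _)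

/-- If `I_{j,m}` contains exactly one point `z = p i₀` of the `N`-point set
`P ⊂ [0,1)²`, then the Haar coefficient of the discrepancy function is
`μ_{j,m} = μ_{j,m}^z − N·2^{-2|j|-4}` where `μ_{j,m}^z = ∫ χ_{C_z}·h_{j,m}`. -/
theorem haar_coeff_one_point (N : ℕ) (p : Fin N → ℝ × ℝ) (hp : ∀ i, p i ∈ unitSq)
    (j m : ℕ × ℕ) (hm1 : m.1 < 2 ^ j.1) (hm2 : m.2 < 2 ^ j.2)
    (i₀ : Fin N) (hi₀ : p i₀ ∈ dyadic j m)
    (huniq : ∀ i, p i ∈ dyadic j m → i = i₀) :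
    ∫ x in unitSq, disc N p x * haar j m x
      = (∫ x in unitSq, chiC (p i₀) x * haar j m x)
        - (N : ℝ) / 2 ^ (2 * (j.1 + j.2) + 4) := by
  have hms : MeasurableSet unitSq := measurableSet_Ico.prod measurableSet_Ico
  set F : Fin N → ℝ × ℝ → ℝ := fun i x =>
    ((if (p i).1 < x.1 then (1:ℝ) else 0) * haar1 j.1 m.1 x.1) *
      ((if (p i).2 < x.2 then (1:ℝ) else 0) * haar1 j.2 m.2 x.2) with hF
  set G : ℝ × ℝ → ℝ := fun x => (x.1 * haar1 j.1 m.1 x.1) * (x.2 * haar1 j.2 m.2 x.2) with hG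
  have hdisc : ∀ x, disc N p x * haar j m x = (∑ i, F i x) - N * G x := by
    intro x
    unfold disc haar
    rw [sub_mul, Finset.sum_mul]
    congr 1
    · refine Finset.sum_congr rfl fun i _ => ?_
      have h0 := hp i
      have h1 : 0 ≤ (p i).1 := h0.1.1
      have h2 : 0 ≤ (p i).2 := h0.2.1
      simp only [hF, h1, h2, true_and]
      by_cases h3 : (p i).1 < x.1 <;> by_cases h4 : (p i).2 < x.2 <;> simp [h3, h4]
    · simp only [hG]
      ring
  have hFint : ∀ i, IntegrableOn (F i) unitSq := by
    intro i
    apply unitSq_integrable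
    · refine Measurable.mul (Measurable.mul (Measurable.ite ?_ measurable_const measurable_const)
        ((haar1_measurable _ _).comp measurable_fst))
        (Measurable.mul (Measurable.ite ?_ measurable_const measurable_const)
        ((haar1_measurable _ _).comp measurable_snd))
      · exact measurableSet_lt measurable_const measurable_fst
      · exact measurableSet_lt measurable_const measurable_snd
    · intro x _
      have := haar_abs_le j m x
      unfold haar at this
      simp only [hF]
      split_ifs <;> simp
      simpa [abs_mul] using this
  have hGint : IntegrableOn G unitSq := by
    apply unitSq_integrable
    · exact Measurable.mul (measurable_fst.mul ((haar1_measurable _ _).comp measurable_fst))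
        (measurable_snd.mul ((haar1_measurable _ _).comp measurable_snd))
    · intro x hx
      have h1 : |x.1| ≤ 1 := by
        rw [abs_of_nonneg hx.1.1]; exact hx.1.2.le
      have h2 : |x.2| ≤ 1 := by
        rw [abs_of_nonneg hx.2.1]; exact hx.2.2.le
      simp only [hG]
      rw [abs_mul, abs_mul, abs_mul]
      exact mul_le_one₀ (mul_le_one₀ h1 (abs_nonneg _) (haar1_abs_le _ _ _)) (by positivity)
        (mul_le_one₀ h2 (abs_nonneg _) (haar1_abs_le _ _ _))
  have hGval : ∫ x in unitSq, G x = 1 / 2 ^ (2 * (j.1 + j.2) + 4) := by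
    simp only [hG]
    rw [unitSq_integral_mul (fun t => t * haar1 j.1 m.1 t) (fun t => t * haar1 j.2 m.2 t),
      haar1_integral_id _ _ hm1, haar1_integral_id _ _ hm2,
      show 2 * (j.1 + j.2) + 4 = (2 * j.1 + 2) + (2 * j.2 + 2) by ring, pow_add _ (2 * j.1 + 2)]
    rw [neg_mul_neg, div_mul_div_comm, one_mul]
  have hFval : ∀ i, ∫ x in unitSq, F i x =
      (∫ t in Set.Ico (0:ℝ) 1, (if (p i).1 < t then (1:ℝ) else 0) * haar1 j.1 m.1 t) *
      ∫ t in Set.Ico (0:ℝ) 1, (if (p i).2 < t then (1:ℝ) else 0) * haar1 j.2 m.2 t := fun i =>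
    unitSq_integral_mul (fun t => (if (p i).1 < t then (1:ℝ) else 0) * haar1 j.1 m.1 t)
      (fun t => (if (p i).2 < t then (1:ℝ) else 0) * haar1 j.2 m.2 t)
  have hFzero : ∀ i, i ≠ i₀ → ∫ x in unitSq, F i x = 0 := by
    intro i hi
    rw [hFval]
    have hn : ¬ (p i ∈ dyadic j m) := fun h => hi (huniq i h)
    by_cases h1 : (p i).1 ∈ Set.Ico ((m.1:ℝ)/2^j.1) (((m.1:ℝ)+1)/2^j.1)
    · have h2 : ¬ ((p i).2 ∈ Set.Ico ((m.2:ℝ)/2^j.2) (((m.2:ℝ)+1)/2^j.2)) :=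
        fun h => hn ⟨h1, h⟩
      rw [haar1_integral_step _ _ hm2 _ h2, mul_zero]
    · rw [haar1_integral_step _ _ hm1 _ h1, zero_mul]
  have hC : ∫ x in unitSq, chiC (p i₀) x * haar j m x = ∫ x in unitSq, F i₀ x := by
    rw [hFval, ← step_le_eq_lt, ← step_le_eq_lt,
      ← unitSq_integral_mul (fun t => (if (p i₀).1 ≤ t then (1:ℝ) else 0) * haar1 j.1 m.1 t)
        (fun t => (if (p i₀).2 ≤ t then (1:ℝ) else 0) * haar1 j.2 m.2 t)]
    refine setIntegral_congr_fun hms fun x hx => ?_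
    have h1 : x.1 < 1 := hx.1.2
    have h2 : x.2 < 1 := hx.2.2
    simp only [chiC, haar, h1, h2, true_and, and_true]
    by_cases h3 : (p i₀).1 ≤ x.1 <;> by_cases h4 : (p i₀).2 ≤ x.2 <;> simp [h3, h4]
  simp_rw [hdisc]
  rw [integral_sub (integrable_finsetSum _ fun i _ => hFint i) (hGint.const_mul _),
    integral_finsetSum _ fun i _ => hFint i, integral_const_mul, hGval, hC,
    Finset.sum_eq_single i₀ (fun i _ hi => hFzero i hi) (by simp)]
  ring


end
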